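/- If a compact set X ⊂ ℂ^N is simply coconnected (every zero-free continuous function on X has a continuous logarithm) and satisfies the generalized argument principle, then the polynomial hull of X equals its rational hull. -/

import Mathlib

open MvPolynomial

/-- The polynomial hull of a set `X ⊆ ℂ^N`. -/
def polyHull (N : ℕ) (X : Set (Fin N → ℂ)) : Set (Fin N → ℂ) :=
  {z | ∀ p : MvPolynomial (Fin N) ℂ,
    ‖eval z p‖ ≤ sSup ((fun x => ‖eval x p‖) '' X)}

/-- `X` satisfies the generalized argument principle: every polynomial having a
continuous logarithm on `X` has no zeros on the polynomial hull of `X`. -/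
def GenArgPrinciple (N : ℕ) (X : Set (Fin N → ℂ)) : Prop :=
  ∀ p : MvPolynomial (Fin N) ℂ,
    (∃ g : (Fin N → ℂ) → ℂ, ContinuousOn g X ∧ ∀ x ∈ X, eval x p = Complex.exp (g x)) →
    ∀ z ∈ polyHull N X, eval z p ≠ 0

/-- `Y` is simply coconnected: every zero-free continuous function on `Y` has a
continuous logarithm. -/
def SimplyCoconnected (N : ℕ) (Y : Set (Fin N → ℂ)) : Prop :=
  ∀ f : (Fin N → ℂ) → ℂ, ContinuousOn f Y → (∀ y ∈ Y, f y ≠ 0) →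
    ∃ g : (Fin N → ℂ) → ℂ, ContinuousOn g Y ∧ ∀ y ∈ Y, f y = Complex.exp (g y)

/-- The rational hull of a set `X ⊆ ℂ^N`:
`{z | every polynomial vanishing at z has a zero on X}`. -/
def ratHull (N : ℕ) (X : Set (Fin N → ℂ)) : Set (Fin N → ℂ) :=
  {z | ∀ p : MvPolynomial (Fin N) ℂ, eval z p = 0 → ∃ x ∈ X, eval x p = 0}

/-- If a compact set `X ⊆ ℂ^N` is simply coconnected and satisfies the generalized
argument principle, then its polynomial hull equals its rational hull. -/
theorem stmt16 (N : ℕ) (X : Set (Fin N → ℂ)) (hX : IsCompact X)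
    (hscc : SimplyCoconnected N X) (hgap : GenArgPrinciple N X) :
    polyHull N X = ratHull N X := by
  ext z
  constructor
  · intro hz p hp
    by_contra h
    push Not at h
    exact hgap p (hscc (fun x => eval x p) (MvPolynomial.continuous_eval p).continuousOn h) z hz hp
  · intro hz p
    obtain ⟨x, hx, hxp⟩ := hz (p - C (eval z p)) (by simp)
    have hxz : eval x p = eval z p := by simpa [sub_eq_zero] using hxp
    rw [← hxz]
    exact le_csSup (hX.image (MvPolynomial.continuous_eval p).norm).bddAbove ⟨x, hx, rfl⟩
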